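/- arXiv:2506.03853 — 3 statements merged into one kernel-verified Lean document; each statement's English description precedes it below -/
import Mathlib

section
/- Let T be a tree and suppose there exists a non-degenerate labeling l : V(T) → ℝ≥0 such that the ultrametric space (V(T), d_l) is separable. Then the vertex set V(T) is countable, i.e., |V(T)| ≤ ℵ₀. -/
open SimpleGraph

/-- For a tree `G` with labeling `l`, the "ultrametric" `d_l`: the maximum of the labels of the
vertices of the unique path joining `u` and `v` (and `0` if `u = v`). -/
noncomputable def treeDist {V : Type*} (G : SimpleGraph V) (hG : G.IsTree) (l : V → NNReal)
    (u v : V) : NNReal :=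
  letI := Classical.decEq V
  if u = v then 0 else ((hG.existsUnique_path u v).choose.support.map l).foldr max 0

/-- A labeling is non-degenerate if `max {l u, l v} > 0` for every edge `{u, v}`. -/
def Nondeg {V : Type*} (G : SimpleGraph V) (l : V → NNReal) : Prop :=
  ∀ u v : V, G.Adj u v → 0 < max (l u) (l v)

/-- A distance function is separable if there is a countable dense subset. -/
def SeparableWith {α : Type*} (d : α → α → NNReal) : Prop :=
  ∃ S : Set α, S.Countable ∧ ∀ x : α, ∀ ε : NNReal, 0 < ε → ∃ s ∈ S, d x s < ε

/-- A set is bounded if it is contained in a closed ball of positive radius. -/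
def BoundedWith {α : Type*} (d : α → α → NNReal) (A : Set α) : Prop :=
  ∃ c : α, ∃ r : NNReal, 0 < r ∧ ∀ x ∈ A, d c x ≤ r

/-- A distance function is locally finite if every bounded set is finite. -/
def LocallyFiniteWith {α : Type*} (d : α → α → NNReal) : Prop :=
  ∀ A : Set α, BoundedWith d A → A.Finite

/-- A graph is a ray if its vertices can be enumerated without repetition as
`x₁, x₂, …` with edges exactly `{xₙ, xₙ₊₁}`. -/
def IsRay {W : Type*} (R : SimpleGraph W) : Prop :=
  ∃ v : ℕ → W, Function.Bijective v ∧
    ∀ a b : W, R.Adj a b ↔ ∃ n : ℕ, (a = v n ∧ b = v (n + 1)) ∨ (a = v (n + 1) ∧ b = v n)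

/-- A tree is a star graph if some vertex `c` (the center) is adjacent to every other vertex. -/
def IsStar {W : Type*} (S : SimpleGraph W) : Prop :=
  S.IsTree ∧ ∃ c : W, ∀ v : W, v ≠ c → S.Adj c v

theorem aux_le_foldr {V : Type*} (l : V → NNReal) (L : List V) (w : V) (hw : w ∈ L) :
    l w ≤ (L.map l).foldr max 0 := by
  induction L with
  | nil => simp at hw
  | cons a L ih =>
    simp only [List.map_cons, List.foldr_cons]
    rcases List.mem_cons.1 hw with rfl | h
    · exact le_max_left _ _
    · exact (ih h).trans (le_max_right _ _)

theorem aux_treeDist {V : Type*} (G : SimpleGraph V) (hG : G.IsTree) (l : V → NNReal)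
    (x s : V) (h : x ≠ s) :
    l x ≤ treeDist G hG l x s ∧ ∃ y, G.Adj x y ∧ l y ≤ treeDist G hG l x s := by
  unfold treeDist
  simp only [h, if_false]
  generalize (hG.existsUnique_path x s).choose = p
  refine ⟨aux_le_foldr l _ _ p.start_mem_support, ?_⟩
  cases p with
  | nil => exact absurd rfl h
  | cons hadj q =>
    refine ⟨_, hadj, aux_le_foldr l _ _ ?_⟩
    simp

theorem aux_common {V : Type*} (G : SimpleGraph V) (hG : G.IsTree) (a b x x' : V) (hab : a ≠ b)
    (h1 : G.Adj x a) (h2 : G.Adj x b) (h3 : G.Adj x' a) (h4 : G.Adj x' b) : x = x' := by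
  have hp : (Walk.cons h1.symm (Walk.cons h2 Walk.nil)).IsPath := by
    simp [Walk.cons_isPath_iff, hab, h1.ne', h2.ne]
  have hq : (Walk.cons h3.symm (Walk.cons h4 Walk.nil)).IsPath := by
    simp [Walk.cons_isPath_iff, hab, h3.ne', h4.ne]
  have := (hG.existsUnique_path a b).unique hp hq
  have h := congrArg Walk.support this
  simpa using h

theorem countable_of_exists_separable {V : Type*} (G : SimpleGraph V) (hG : G.IsTree)
    (l : V → NNReal) (hl : Nondeg G l) (hsep : SeparableWith (treeDist G hG l)) :
    Countable V := by
  obtain ⟨S, hS, hd⟩ := hsep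
  have hpos : ∀ x, 0 < l x → x ∈ S := by
    intro x hx
    obtain ⟨s, hs, hlt⟩ := hd x _ hx
    by_cases h : x = s
    · exact h ▸ hs
    · exact absurd hlt (not_lt.2 (aux_treeDist G hG l x s h).1)
  have hnb : ∀ x, x ∉ S → ∀ ε, 0 < ε → ∃ y, G.Adj x y ∧ l y < ε ∧ 0 < l y ∧ y ∈ S := by
    intro x hx ε hε
    obtain ⟨s, hs, hlt⟩ := hd x ε hε
    have h : x ≠ s := fun h => hx (h ▸ hs)
    obtain ⟨y, hy, hle⟩ := (aux_treeDist G hG l x s h).2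
    have hy0 : 0 < l y := by
      rcases lt_max_iff.1 (hl x y hy) with h0 | h0
      · exact absurd (hpos x h0) hx
      · exact h0
    exact ⟨y, hy, hle.trans_lt hlt, hy0, hpos y hy0⟩
  have hpair : ∀ x : (Sᶜ : Set V), ∃ p : S × S, p.1.1 ≠ p.2.1 ∧ G.Adj x p.1 ∧ G.Adj x p.2 := by
    rintro ⟨x, hx⟩
    obtain ⟨a, ha, -, ha0, haS⟩ := hnb x hx 1 one_pos
    obtain ⟨b, hb, hlt, -, hbS⟩ := hnb x hx _ ha0
    exact ⟨(⟨a, haS⟩, ⟨b, hbS⟩), fun h => hlt.ne (by rw [show a = b from h]), ha, hb⟩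
  choose f hf using hpair
  have : Countable S := hS.to_subtype
  have hinj : Function.Injective f := by
    intro x x' h
    have h' := hf x'
    rw [← h] at h'
    exact Subtype.ext (aux_common G hG _ _ _ _ (hf x).1 (hf x).2.1 (hf x).2.2 h'.2.1 h'.2.2)
  have hc : (Sᶜ : Set V).Countable := Set.countable_coe_iff.1 hinj.countable
  have hu := hS.union hc
  rw [Set.union_compl_self] at hu
  exact Set.countable_univ_iff.1 hu
end

section
/- Let S be a star graph with a non-degenerate labeling l_S : V(S) → ℝ≥0. Then the ultrametric space (V(S), d_{l_S}) is separable if and only if the set W_ε = {v ∈ V(S) : l_S(v) ≤ ε} is countable for every ε > 0. -/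
open SimpleGraph

theorem le_foldr_max_of_mem (L : List NNReal) (a : NNReal) (h : a ∈ L) : a ≤ L.foldr max 0 := by
  induction L with
  | nil => simp at h
  | cons b L ih =>
    rcases List.mem_cons.1 h with rfl | h
    · simp
    · simpa using Or.inr (ih h)

theorem le_treeDist_star {V : Type*} (S : SimpleGraph V) (hS : S.IsTree) (l : V → NNReal) (c : V)
    (hc : ∀ v : V, v ≠ c → S.Adj c v) (x s : V) (hx : x ≠ c) (hxs : x ≠ s) :
    max (l x) (l c) ≤ treeDist S hS l x s := by
  unfold treeDist
  rw [if_neg hxs]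
  have hu := (hS.existsUnique_path x s).choose_spec.2
  have hmem : c ∈ (hS.existsUnique_path x s).choose.support := by
    by_cases hs : s = c
    · subst hs
      exact Walk.end_mem_support _
    · have hp : (Walk.cons (hc x hx).symm (Walk.cons (hc s hs) Walk.nil)).IsPath := by
        simp [Walk.cons_isPath_iff, hx, hxs, Ne.symm hs]
      rw [← hu _ hp]
      simp
  exact max_le (le_foldr_max_of_mem _ _ (List.mem_map_of_mem (Walk.start_mem_support _)))
    (le_foldr_max_of_mem _ _ (List.mem_map_of_mem hmem))

theorem star_separable_iff_sublevel_countable {V : Type*} (S : SimpleGraph V)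
    (hS : IsStar S) (l : V → NNReal) (hl : Nondeg S l) :
    SeparableWith (treeDist S hS.1 l) ↔
      ∀ ε : NNReal, 0 < ε → {v : V | l v ≤ ε}.Countable := by
  constructor
  · rintro ⟨D, hD, hd⟩ ε -
    obtain ⟨c, hc⟩ := hS.2
    refine (hD.insert c).mono ?_
    intro x _
    by_cases hx : x = c
    · exact Or.inl hx
    · right
      obtain ⟨s, hs, hlt⟩ := hd x _ (hl x c (hc x hx).symm)
      by_cases hxs : x = s
      · exact hxs ▸ hs
      · exact absurd (le_treeDist_star S hS.1 l c hc x s hx hxs) (not_le.2 hlt)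
  · intro h
    refine ⟨Set.univ, ?_, fun x ε hε => ⟨x, trivial, by simpa [treeDist] using hε⟩⟩
    refine (Set.countable_iUnion fun n : ℕ => h (n + 1) (by positivity)).mono ?_
    intro x _
    obtain ⟨n, hn⟩ := exists_nat_ge (l x)
    exact Set.mem_iUnion.2 ⟨n, hn.trans (by simp)⟩
end

section
/- Let (T, l) be a labeled tree with non-degenerate labeling l : V(T) → ℝ≥0, and let A be a nonempty bounded subset of the ultrametric space (V(T), d_l). Then the vertex set V(H_A) of the hull H_A of A is also a bounded subset of (V(T), d_l). -/
open SimpleGraph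

theorem foldr_max_le_iff_aux (L : List NNReal) (R : NNReal) :
    L.foldr max 0 ≤ R ↔ ∀ x ∈ L, x ≤ R := by
  induction L with
  | nil => simp
  | cons a L ih => simp [ih]

theorem hull_verts_bounded {V : Type*} (G : SimpleGraph V) (hG : G.IsTree)
    (l : V → NNReal) (hl : Nondeg G l) (A : Set V) (hA : A.Nonempty)
    (hbdd : BoundedWith (treeDist G hG l) A) (HA : G.Subgraph)
    (hHA : IsLeast {H : G.Subgraph | H.coe.IsTree ∧ A ⊆ H.verts} HA) :
    BoundedWith (treeDist G hG l) HA.verts := by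
  classical
  obtain ⟨c, r, hr, hc⟩ := hbdd
  let R := max r (l c)
  let S : Set V := {v | ∃ p : G.Walk c v, ∀ w ∈ p.support, l w ≤ R}
  have hcS : c ∈ S := ⟨Walk.nil, by simp [R]⟩
  have hconn : (G.induce S).Connected := by
    apply induce_connected_of_patches c hcS
    rintro v ⟨p, hp⟩
    refine ⟨{w | w ∈ p.support}, ?_, p.start_mem_support, p.end_mem_support,
      p.connected_induce_support.preconnected _ _⟩
    intro w hw
    exact ⟨p.takeUntil w hw, fun x hx => hp x (p.support_takeUntil_subset_support hw hx)⟩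
  have hle : HA ≤ (⊤ : G.Subgraph).induce S := by
    apply hHA.2
    refine ⟨?_, ?_⟩
    · have : (G.induce S).IsTree := ⟨hconn, hG.isAcyclic.induce S⟩
      rwa [induce_eq_coe_induce_top] at this
    · intro a ha
      have h := hc a ha
      change a ∈ S
      by_cases hca : c = a
      · exact hca ▸ hcS
      · simp only [treeDist, if_neg hca] at h
        rw [foldr_max_le_iff_aux] at h
        exact ⟨_, fun w hw => (h _ (List.mem_map_of_mem hw)).trans (le_max_left _ _)⟩
  refine ⟨c, R, lt_of_lt_of_le hr (le_max_left _ _), fun v hv => ?_⟩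
  obtain ⟨p, hp⟩ : v ∈ S := hle.1 hv
  by_cases hcv : c = v
  · simp [treeDist, hcv]
  · simp only [treeDist, if_neg hcv]
    rw [foldr_max_le_iff_aux]
    have hq := (hG.existsUnique_path c v).choose_spec.2 p.bypass p.bypass_isPath
    rw [← hq]
    intro x hx
    obtain ⟨w, hw, rfl⟩ := List.mem_map.1 hx
    exact hp w (p.support_bypass_subset hw)
end
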